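/- For any two complex n×n positive semidefinite matrices A and B and any integer p with 0 ≤ p ≤ 7, all coefficients of the polynomial Tr[(A + tB)^p] in t are nonnegative. -/

import Mathlib

open Matrix ComplexOrder

/-!
Let `S_{p,r}` be the coefficient of `tʳ` in `(a + t b)ᵖ` and `τ` a positive tracial functional.
Marking a letter `b`, or a letter `a`, of a cyclic word gives
`(r + 1) τ(S_{p+1,r+1}) = (p + 1) τ(b S_{p,r})` and
`(p + 1 - r) τ(S_{p+1,r}) = (p + 1) τ(a S_{p,r})`.

Positivity descends from exponent `p + 1` to exponent `p`. For invertible `a`, let `d` run along a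
path from `0` to `1` with `t² d' = d a d`. Then `τ(S_{p,r}(da, db))` has derivative
`t⁻² p τ(da S_{p,r}(da, db))`, by the second identity a nonnegative multiple of
`τ(S_{p+1,r}(da, db))`. Since the trace does not distinguish `(da, db)` from the positive pair
`(√d a √d, √d b √d)`, this derivative is nonnegative, and `τ(S_{p,r})` grows from its value at
`(0, 0)` to its value at `(a, b)`. A general `a` is a limit of invertible ones.

This leaves exponent `7`, with `r ≤ 3` by the symmetry between `a` and `b`. For `r = 1, 2` the first
identity yields traces of products of two positive elements. For `r = 3` it yields `τ(b S_{6,2})`,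
three times the trace of the positive element `(a²b + aba) b (a²b + aba)⋆ + (ba²) b (ba²)⋆`.
-/

open Polynomial
open scoped Ring

/-- A map on a multiplicative structure is tracial if it does not see the order of the factors of
a product, as for the trace of matrices. -/
def IsTracial {R M : Type*} [Mul R] (τ : R → M) : Prop :=
  ∀ x y, τ (x * y) = τ (y * x)

/-- The pencil `a + t b`, as a polynomial in a variable `t` commuting with the coefficients. -/
noncomputable def pencil {R : Type*} [Semiring R] (a b : R) : R[X] :=
  C a + X * C b

/-- The Hurwitz product `S_{p,r}(a, b)`: the sum of all words of length `p` in `a` and `b` with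
exactly `r` letters `b`, encoded as the coefficient of `tʳ` in `(a + t b)ᵖ`. -/
noncomputable def hurwitzProduct {R : Type*} [Semiring R] (a b : R) (p r : ℕ) : R :=
  (pencil a b ^ p).coeff r

/-- The derivative at `x`, in the direction `y`, of the `m`-th power map of a ring that need not
be commutative. -/
def powDeriv {R : Type*} [Semiring R] (x y : R) (m : ℕ) : R :=
  ∑ i ∈ Finset.range m, x ^ i * y * x ^ (m - 1 - i)

section Semiring

variable {R : Type*} [Semiring R]

lemma powDeriv_succ (x y : R) (m : ℕ) :
    powDeriv x y (m + 1) = powDeriv x y m * x + x ^ m * y := by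
  rw [powDeriv, Finset.sum_range_succ, powDeriv, Finset.sum_mul, Nat.add_sub_cancel, Nat.sub_self,
    pow_zero, mul_one]
  congr 1
  refine Finset.sum_congr rfl fun i hi ↦ ?_
  rw [mul_assoc _ _ x, ← pow_succ]
  congr 2
  have := Finset.mem_range.mp hi
  omega

lemma derivative_pow_eq_powDeriv (F : R[X]) (m : ℕ) :
    derivative (F ^ m) = powDeriv F (derivative F) m := by
  induction m with
  | zero => simp [powDeriv]
  | succ m ih => rw [pow_succ, derivative_mul, ih, powDeriv_succ]

lemma C_mul_pencil (c a b : R) : C c * pencil a b = pencil (c * a) (c * b) := by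
  rw [pencil, pencil, mul_add, C_mul, C_mul, ← mul_assoc, ← mul_assoc, X_mul_C]

lemma pencil_mul_C (a b c : R) : pencil a b * C c = pencil (a * c) (b * c) := by
  rw [pencil, pencil, add_mul, C_mul, C_mul, mul_assoc]

lemma derivative_pencil (a b : R) : derivative (pencil a b) = C b := by
  simp [pencil]

lemma coeff_C_mul_pencil_pow (c a b : R) (p r : ℕ) :
    (C c * pencil a b ^ p).coeff r = c * hurwitzProduct a b p r :=
  coeff_C_mul _

lemma hurwitzProduct_zero_left (a b : R) (r : ℕ) :
    hurwitzProduct a b 0 r = if r = 0 then 1 else 0 := by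
  rw [hurwitzProduct, pow_zero, coeff_one]

lemma hurwitzProduct_zero_right (a b : R) (p : ℕ) : hurwitzProduct a b p 0 = a ^ p := by
  induction p with
  | zero => rw [hurwitzProduct_zero_left, if_pos rfl, pow_zero]
  | succ p ih =>
    rw [hurwitzProduct, pow_succ, mul_coeff_zero, ← hurwitzProduct, ih, pow_succ]
    simp [pencil]

lemma hurwitzProduct_succ_succ (a b : R) (p r : ℕ) :
    hurwitzProduct a b (p + 1) (r + 1)
      = a * hurwitzProduct a b p (r + 1) + b * hurwitzProduct a b p r := by
  simp only [hurwitzProduct, pow_succ']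
  rw [pencil, add_mul, mul_assoc, coeff_add, coeff_C_mul, coeff_X_mul, coeff_C_mul]

lemma hurwitzProduct_succ_succ' (a b : R) (p r : ℕ) :
    hurwitzProduct a b (p + 1) (r + 1)
      = hurwitzProduct a b p (r + 1) * a + hurwitzProduct a b p r * b := by
  simp only [hurwitzProduct, pow_succ]
  rw [pencil, mul_add, ← mul_assoc, coeff_add, coeff_mul_C, coeff_mul_C, coeff_mul_X]

lemma hurwitzProduct_one_right (a b : R) (p : ℕ) :
    hurwitzProduct a b p 1 = powDeriv a b p := by
  induction p with
  | zero => simp [hurwitzProduct_zero_left, powDeriv]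
  | succ p ih => rw [hurwitzProduct_succ_succ', ih, hurwitzProduct_zero_right, powDeriv_succ]

lemma hurwitzProduct_eq_zero_of_lt (a b : R) {p r : ℕ} (h : p < r) :
    hurwitzProduct a b p r = 0 := by
  induction p generalizing r with
  | zero => simp [hurwitzProduct_zero_left, h.ne']
  | succ p ih =>
    obtain ⟨r, rfl⟩ := Nat.exists_eq_add_one_of_ne_zero (Nat.ne_zero_of_lt h)
    rw [hurwitzProduct_succ_succ, ih (by omega), ih (by omega), mul_zero, mul_zero, add_zero]

lemma hurwitzProduct_self_right (a b : R) (p : ℕ) : hurwitzProduct a b p p = b ^ p := by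
  induction p with
  | zero => simp [hurwitzProduct_zero_left]
  | succ p ih =>
    rw [hurwitzProduct_succ_succ, ih, hurwitzProduct_eq_zero_of_lt a b p.lt_succ_self, mul_zero,
      zero_add, pow_succ']

lemma hurwitzProduct_swap (a b : R) (q r : ℕ) :
    hurwitzProduct a b (q + r) r = hurwitzProduct b a (q + r) q := by
  induction q generalizing r with
  | zero => rw [zero_add, hurwitzProduct_self_right, hurwitzProduct_zero_right]
  | succ q ihq =>
    induction r with
    | zero => rw [add_zero, hurwitzProduct_self_right, hurwitzProduct_zero_right]
    | succ r ihr =>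
      have hr : q + 1 + r = q + (r + 1) := by omega
      rw [← add_assoc, hurwitzProduct_succ_succ, hurwitzProduct_succ_succ, ihr, hr, ihq, add_comm]

lemma hurwitzProduct_succ_eq_sum (a b : R) (p r : ℕ) :
    hurwitzProduct a b p (r + 1)
      = ∑ i ∈ Finset.range p, a ^ i * (b * hurwitzProduct a b (p - 1 - i) r) := by
  induction p with
  | zero => simp [hurwitzProduct_zero_left]
  | succ p ih =>
    rw [hurwitzProduct_succ_succ, ih, Finset.sum_range_succ', Finset.mul_sum, pow_zero, one_mul]
    simp only [← mul_assoc, ← pow_succ', Nat.add_sub_cancel, Nat.sub_zero]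
    congr! 4
    grind

lemma star_hurwitzProduct [StarRing R] (a b : R) (p r : ℕ) :
    star (hurwitzProduct a b p r) = hurwitzProduct (star a) (star b) p r := by
  induction p generalizing r with
  | zero => simp [hurwitzProduct_zero_left, apply_ite star]
  | succ p ih =>
    cases r with
    | zero => simp only [hurwitzProduct_zero_right, star_pow]
    | succ r => rw [hurwitzProduct_succ_succ, hurwitzProduct_succ_succ', star_add, star_mul,
        star_mul, ih, ih]

end Semiring

namespace IsTracial

section AddCommMonoid

variable {R M F : Type*} [Semiring R] [AddCommMonoid M] [FunLike F R M]
  [AddMonoidHomClass F R M] {τ : F} (hτ : IsTracial τ)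
include hτ

lemma map_coeff_mul_comm (P Q : R[X]) (r : ℕ) : τ ((P * Q).coeff r) = τ ((Q * P).coeff r) := by
  simp only [coeff_mul, map_sum]
  rw [← Finset.Nat.sum_antidiagonal_swap]
  exact Finset.sum_congr rfl fun x _ ↦ hτ _ _

lemma map_coeff_powDeriv (P Q : R[X]) (m r : ℕ) :
    τ ((powDeriv P Q m).coeff r) = m • τ ((Q * P ^ (m - 1)).coeff r) := by
  rw [powDeriv, finsetSum_coeff, map_sum, Finset.sum_eq_card_nsmul, Finset.card_range]
  intro i hi
  rw [mul_assoc, hτ.map_coeff_mul_comm, mul_assoc, ← pow_add]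
  have := Finset.mem_range.mp hi
  congr 4
  omega

lemma map_coeff_powDeriv_mul_self (P Q : R[X]) (m r : ℕ) :
    τ ((powDeriv P (Q * P) m).coeff r) = m • τ ((Q * P ^ m).coeff r) := by
  rw [hτ.map_coeff_powDeriv]
  cases m with
  | zero => rw [zero_nsmul, zero_nsmul]
  | succ m => rw [Nat.add_sub_cancel, mul_assoc, ← pow_succ']

lemma map_hurwitzProduct_mul_comm (c a b : R) (p r : ℕ) :
    τ (hurwitzProduct (c * a) (c * b) p r) = τ (hurwitzProduct (a * c) (b * c) p r) := by
  simp only [hurwitzProduct, ← C_mul_pencil, ← pencil_mul_C]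
  cases p with
  | zero => simp only [pow_zero]
  | succ p => rw [pow_succ, ← mul_assoc, mul_pow_mul, mul_assoc, hτ.map_coeff_mul_comm, pow_succ,
      mul_assoc]

lemma succ_nsmul_map_hurwitzProduct_succ (a b : R) (p r : ℕ) :
    (r + 1) • τ (hurwitzProduct a b (p + 1) (r + 1))
      = (p + 1) • τ (b * hurwitzProduct a b p r) := by
  have h := congrArg (fun P ↦ τ (P.coeff r)) (derivative_pow_eq_powDeriv (pencil a b) (p + 1))
  simp only [hτ.map_coeff_powDeriv, derivative_pencil, coeff_derivative, Nat.add_sub_cancel,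
    coeff_C_mul_pencil_pow] at h
  rw [← h, ← map_nsmul, nsmul_eq_mul', Nat.cast_add_one, hurwitzProduct]

lemma succ_nsmul_map_mul_hurwitzProduct (a b : R) (p r : ℕ) :
    (p + 1) • τ (a * hurwitzProduct a b p r) + r • τ (hurwitzProduct a b (p + 1) r)
      = (p + 1) • τ (hurwitzProduct a b (p + 1) r) := by
  cases r with
  | zero => simp only [hurwitzProduct_zero_right, ← pow_succ', zero_nsmul, add_zero]
  | succ r =>
    rw [hτ.succ_nsmul_map_hurwitzProduct_succ, hurwitzProduct_succ_succ, map_add, nsmul_add]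

end AddCommMonoid

lemma map_mul_hurwitzProduct_six_two {R M F : Type*} [Semiring R] [AddCommGroup M]
    [FunLike F R M] [AddMonoidHomClass F R M] {τ : F} (hτ : IsTracial τ) (a b : R) :
    τ (b * hurwitzProduct a b 6 2)
      = 3 • τ ((a ^ 2 * b + a * b * a) * b * (a * b * a + b * a ^ 2)
          + b * a ^ 2 * b * a ^ 2 * b) := by
  let T (i j k : ℕ) : M := τ (b * (a ^ i * (b * (a ^ j * (b * a ^ k)))))
  have cyclic (i j k : ℕ) : T i j k = T j k i := by
    simp only [T]
    rw [← mul_assoc, hτ]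
    simp only [mul_assoc]
  have words : τ (b * hurwitzProduct a b 6 2)
      = ∑ i ∈ Finset.range 6, ∑ j ∈ Finset.range (5 - i), T i j (4 - i - j) := by
    rw [hurwitzProduct_succ_eq_sum]
    simp only [hurwitzProduct_one_right, powDeriv, Finset.mul_sum, map_sum, mul_assoc, T]
    congr! 10
    omega
  have squares : τ ((a ^ 2 * b + a * b * a) * b * (a * b * a + b * a ^ 2)
      + b * a ^ 2 * b * a ^ 2 * b) = T 0 1 3 + T 0 0 4 + T 1 1 2 + T 1 0 3 + T 2 2 0 := by
    have expand (i j k l : ℕ) :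
        τ (a ^ i * b * a ^ j * b * (a ^ k * b * a ^ l)) = T j k (l + i) := by
      simp only [T]
      rw [pow_add, mul_assoc, mul_assoc, mul_assoc, hτ]
      simp only [mul_assoc]
    have h1 := expand 2 0 1 1
    have h2 := expand 2 0 0 2
    have h3 := expand 1 1 1 1
    have h4 := expand 1 1 0 2
    have h5 := expand 0 2 2 0
    simp only [pow_zero, pow_one, one_mul, mul_one, mul_assoc] at h1 h2 h3 h4 h5
    simp only [add_mul, mul_add, map_add, mul_assoc, h1, h2, h3, h4, h5]
    abel
  rw [words, squares]
  simp only [Finset.sum_range_succ, Finset.sum_range_zero, Nat.reduceSub, Nat.sub_zero, zero_add,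
    add_zero]
  -- The words of `b S_{6,2}` form five cyclic classes of size three, three rotations each.
  linear_combination (norm := module) (cyclic 1 3 0 + 2 • cyclic 3 0 1)
    + (cyclic 0 4 0 + 2 • cyclic 4 0 0) + (cyclic 1 2 1 + 2 • cyclic 2 1 1)
    + (cyclic 0 3 1 + 2 • cyclic 3 1 0) + (cyclic 2 0 2 + 2 • cyclic 0 2 2)

end IsTracial

lemma nonneg_of_nsmul_nonneg {M : Type*} [AddCommGroup M] [PartialOrder M] [Module ℝ M]
    [PosSMulMono ℝ M] {n : ℕ} (hn : n ≠ 0) {x : M} (h : 0 ≤ n • x) : 0 ≤ x := by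
  rwa [← Nat.cast_smul_eq_nsmul ℝ, smul_nonneg_iff_nonneg_of_pos_left (by positivity)] at h

namespace IsTracial

section OrderedModule

variable {R M F : Type*} [Semiring R] [AddCommGroup M] [PartialOrder M] [IsOrderedAddMonoid M]
  [Module ℝ M] [PosSMulMono ℝ M] [FunLike F R M] [AddMonoidHomClass F R M] {τ : F} {a b : R}
  {p r : ℕ}

lemma map_hurwitzProduct_succ_succ_nonneg (hτ : IsTracial τ)
    (h : 0 ≤ τ (b * hurwitzProduct a b p r)) : 0 ≤ τ (hurwitzProduct a b (p + 1) (r + 1)) :=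
  nonneg_of_nsmul_nonneg r.succ_ne_zero <|
    hτ.succ_nsmul_map_hurwitzProduct_succ a b p r ▸ nsmul_nonneg h (p + 1)

lemma map_mul_hurwitzProduct_nonneg (hτ : IsTracial τ) (hr : r ≤ p)
    (h : 0 ≤ τ (hurwitzProduct a b (p + 1) r)) : 0 ≤ τ (a * hurwitzProduct a b p r) := by
  have split := hτ.succ_nsmul_map_mul_hurwitzProduct a b p r
  rw [← eq_sub_iff_add_eq, sub_eq_add_neg, ← sub_nsmul _ (by omega)] at split
  exact nonneg_of_nsmul_nonneg p.succ_ne_zero (split ▸ nsmul_nonneg h _)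

end OrderedModule

end IsTracial

section NormedAlgebra

variable {𝕜 R : Type*} [NontriviallyNormedField 𝕜] [NormedRing R] [NormedAlgebra 𝕜 R]

lemma hasDerivAt_coeff_mul {F G : 𝕜 → R[X]} {F' G' : R[X]} {s : 𝕜}
    (hF : ∀ r, HasDerivAt (fun t ↦ (F t).coeff r) (F'.coeff r) s)
    (hG : ∀ r, HasDerivAt (fun t ↦ (G t).coeff r) (G'.coeff r) s) (r : ℕ) :
    HasDerivAt (fun t ↦ (F t * G t).coeff r) ((F' * G s + F s * G').coeff r) s := by
  simp only [coeff_add, coeff_mul, ← Finset.sum_add_distrib]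
  exact HasDerivAt.fun_sum fun x _ ↦ (hF x.1).mul (hG x.2)

lemma hasDerivAt_coeff_pow {F : 𝕜 → R[X]} {F' : R[X]} {s : 𝕜}
    (hF : ∀ r, HasDerivAt (fun t ↦ (F t).coeff r) (F'.coeff r) s) (m r : ℕ) :
    HasDerivAt (fun t ↦ (F t ^ m).coeff r) ((powDeriv (F s) F' m).coeff r) s := by
  induction m generalizing r with
  | zero => simpa [powDeriv] using hasDerivAt_const s ((1 : R[X]).coeff r)
  | succ m ih => simpa only [pow_succ, powDeriv_succ] using hasDerivAt_coeff_mul ih hF r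

lemma hasDerivAt_hurwitzProduct {a b : 𝕜 → R} {a' b' : R} {s : 𝕜} (ha : HasDerivAt a a' s)
    (hb : HasDerivAt b b' s) (p r : ℕ) :
    HasDerivAt (fun t ↦ hurwitzProduct (a t) (b t) p r)
      ((powDeriv (pencil (a s) (b s)) (pencil a' b') p).coeff r) s := by
  refine hasDerivAt_coeff_pow (fun r ↦ ?_) p r
  match r with
  | 0 => simpa [pencil] using ha
  | 1 => simpa [pencil, coeff_C] using hb
  | r + 2 => simpa [pencil, coeff_C] using hasDerivAt_const s (0 : R)

lemma IsTracial.hasDerivAt_map_hurwitzProduct_mul_left {E : Type*} [NormedAddCommGroup E]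
    [NormedSpace 𝕜 E] {τ : R →L[𝕜] E} (hτ : IsTracial τ) (a b : R) {d : 𝕜 → R} {c : R} {t : 𝕜}
    (hd : HasDerivAt d (c * d t) t) (p r : ℕ) :
    HasDerivAt (fun t ↦ τ (hurwitzProduct (d t * a) (d t * b) p r))
      (p • τ (c * hurwitzProduct (d t * a) (d t * b) p r)) t := by
  have := τ.hasFDerivAt.comp_hasDerivAt t
    (hasDerivAt_hurwitzProduct (hd.mul_const a) (hd.mul_const b) p r)
  rwa [mul_assoc, mul_assoc, ← C_mul_pencil c, hτ.map_coeff_powDeriv_mul_self,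
    coeff_C_mul_pencil_pow] at this

end NormedAlgebra

section RealNormedAlgebra

variable {R : Type*} [NormedRing R] [NormedAlgebra ℝ R]

/-- The path `t ↦ (1 + (t⁻¹ - 1) a)⁻¹` from `0` to `1` along which positivity descends, written
without `t⁻¹` so that it is differentiable at `0` when `a` is invertible. It takes the junk value
`0` where `t + (1 - t) a` is not invertible. -/
noncomputable def inversePath (a : R) (t : ℝ) : R :=
  t • (t • 1 + (1 - t) • a)⁻¹ʳ

lemma inversePath_zero (a : R) : inversePath a 0 = 0 := by
  rw [inversePath, zero_smul]

lemma inversePath_one (a : R) : inversePath a 1 = 1 := by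
  simp [inversePath]

lemma hasDerivAt_inversePath [CompleteSpace R] {a : R} {t : ℝ}
    (h : IsUnit (t • 1 + (1 - t) • a)) :
    HasDerivAt (inversePath a)
      ((t • 1 + (1 - t) • a)⁻¹ʳ * a * (t • 1 + (1 - t) • a)⁻¹ʳ) t := by
  obtain ⟨u, hu⟩ := h
  have affine : HasDerivAt (fun t : ℝ ↦ t • (1 : R) + (1 - t) • a) (1 - a) t := by
    simpa [sub_eq_add_neg] using ((hasDerivAt_id t).smul_const (1 : R)).fun_add
      (((hasDerivAt_id t).const_sub 1).smul_const a)
  have inverse := (hu ▸ hasFDerivAt_ringInverse (𝕜 := ℝ) u).comp_hasDerivAt t affine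
  refine ((hasDerivAt_id t).smul inverse).congr_deriv ?_
  have sandwich : (↑u⁻¹ : R) = ↑u⁻¹ * (t • 1 + (1 - t) • a) * ↑u⁻¹ := by simp [← hu]
  simp only [id, Function.comp_apply, ← hu, Ring.inverse_unit, _root_.neg_apply,
    ContinuousLinearMap.mulLeftRight_apply, one_smul]
  nth_rw 3 [sandwich]
  simp only [mul_sub, sub_mul, mul_add, add_mul, mul_smul_comm, smul_mul_assoc, mul_one]
  module

lemma hasDerivAt_inversePath_of_ne_zero [CompleteSpace R] {a : R} {t : ℝ}
    (h : IsUnit (t • 1 + (1 - t) • a)) (ht : t ≠ 0) :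
    HasDerivAt (inversePath a) ((t ^ 2)⁻¹ • (inversePath a t * a) * inversePath a t) t := by
  refine (hasDerivAt_inversePath h).congr_deriv ?_
  simp only [inversePath, smul_mul_assoc, mul_smul_comm, smul_smul]
  rw [show t * ((t ^ 2)⁻¹ * t) = 1 by field_simp, one_smul]

lemma continuousAt_hurwitzProduct_inversePath [CompleteSpace R] {a : R} (b : R) {t : ℝ}
    (h : IsUnit (t • 1 + (1 - t) • a)) (p r : ℕ) :
    ContinuousAt (fun t ↦ hurwitzProduct (inversePath a t * a) (inversePath a t * b) p r) t :=
  have hd := hasDerivAt_inversePath h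
  (hasDerivAt_hurwitzProduct (hd.mul_const a) (hd.mul_const b) p r).continuousAt

theorem IsTracial.map_hurwitzProduct_zero_zero_le [CompleteSpace R] {τ : R →L[ℝ] ℝ}
    (hτ : IsTracial τ) {a : R} (b : R) {p r : ℕ} (hr : r ≤ p)
    (hunit : ∀ t ∈ Set.Icc (0 : ℝ) 1, IsUnit (t • 1 + (1 - t) • a))
    (hpos : ∀ t ∈ Set.Ioo (0 : ℝ) 1,
      0 ≤ τ (hurwitzProduct (inversePath a t * a) (inversePath a t * b) (p + 1) r)) :
    τ (hurwitzProduct 0 0 p r) ≤ τ (hurwitzProduct a b p r) := by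
  have mono : MonotoneOn
      (fun t ↦ τ (hurwitzProduct (inversePath a t * a) (inversePath a t * b) p r))
      (Set.Icc 0 1) := by
    refine monotoneOn_of_deriv_nonneg (convex_Icc 0 1) (fun t ht ↦ ?_) ?_ ?_
    · exact (τ.continuous.continuousAt.comp
        (continuousAt_hurwitzProduct_inversePath b (hunit t ht) p r)).continuousWithinAt
    all_goals
      rw [interior_Icc]
      intro t ht
      have hderiv := hτ.hasDerivAt_map_hurwitzProduct_mul_left a b
        (hasDerivAt_inversePath_of_ne_zero (hunit t (Set.Ioo_subset_Icc_self ht)) ht.1.ne') p r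
    · exact hderiv.differentiableAt.differentiableWithinAt
    · rw [hderiv.deriv, smul_mul_assoc, map_smul]
      have := hτ.map_mul_hurwitzProduct_nonneg hr (hpos t ht)
      positivity
  simpa [inversePath_zero, inversePath_one] using
    mono (Set.left_mem_Icc.2 zero_le_one) (Set.right_mem_Icc.2 zero_le_one) zero_le_one

end RealNormedAlgebra

section CStarAlgebra

variable {R : Type*} [CStarAlgebra R] [PartialOrder R] [StarOrderedRing R] {τ : R →ₚ[ℂ] ℂ}
  {a b : R}

lemma isStrictlyPositive_smul_one_add_smul (ha : IsStrictlyPositive a) {t : ℝ}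
    (ht : t ∈ Set.Icc (0 : ℝ) 1) : IsStrictlyPositive (t • (1 : R) + (1 - t) • a) := by
  rcases ht.2.eq_or_lt with rfl | ht1
  · simp
  · exact IsStrictlyPositive.nonneg_add (smul_nonneg ht.1 zero_le_one) (ha.smul (sub_pos.2 ht1))

lemma inversePath_nonneg (ha : IsStrictlyPositive a) {t : ℝ} (ht : t ∈ Set.Icc (0 : ℝ) 1) :
    0 ≤ inversePath a t :=
  smul_nonneg ht.1 (isStrictlyPositive_smul_one_add_smul ha ht).ringInverse.nonneg

lemma map_hurwitzProduct_nonneg_iff_re (ha : 0 ≤ a) (hb : 0 ≤ b) (p r : ℕ) :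
    0 ≤ τ (hurwitzProduct a b p r) ↔ 0 ≤ (τ (hurwitzProduct a b p r)).re := by
  have selfAdjoint : IsSelfAdjoint (hurwitzProduct a b p r) := by
    rw [IsSelfAdjoint, star_hurwitzProduct, ha.isSelfAdjoint.star_eq, hb.isSelfAdjoint.star_eq]
  have im_eq_zero := Complex.conj_eq_iff_im.1 (selfAdjoint.map' τ)
  simp [Complex.nonneg_iff, im_eq_zero]

namespace IsTracial

lemma map_mul_nonneg (hτ : IsTracial τ) (ha : 0 ≤ a) (hb : 0 ≤ b) : 0 ≤ τ (a * b) := by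
  rw [← CFC.sqrt_mul_sqrt_self a, mul_assoc, hτ]
  exact τ.map_nonneg (conjugate_nonneg_of_nonneg hb (CFC.sqrt_nonneg a))

lemma map_hurwitzProduct_mul_left_eq_conjSqrt (hτ : IsTracial τ) {c : R} (hc : 0 ≤ c) (a b : R)
    (p r : ℕ) :
    τ (hurwitzProduct (c * a) (c * b) p r)
      = τ (hurwitzProduct (CFC.conjSqrt c a) (CFC.conjSqrt c b) p r) := by
  simp only [CFC.conjSqrt_apply]
  rw [← hτ.map_hurwitzProduct_mul_comm]
  simp only [← mul_assoc, CFC.sqrt_mul_sqrt_self c]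

lemma map_hurwitzProduct_nonneg_of_succ_of_isStrictlyPositive (hτ : IsTracial τ) {p r : ℕ}
    (hr : r ≤ p) (hpos : ∀ {x y : R}, 0 ≤ x → 0 ≤ y → 0 ≤ τ (hurwitzProduct x y (p + 1) r))
    (ha : IsStrictlyPositive a) (hb : 0 ≤ b) : 0 ≤ τ (hurwitzProduct a b p r) := by
  let ρ : R →L[ℝ] ℝ := Complex.reCLM.comp
    ((⟨τ.toLinearMap, map_continuous τ⟩ : R →L[ℂ] ℂ).restrictScalars ℝ)
  have hρ : IsTracial ρ := fun x y ↦ congrArg Complex.re (hτ x y)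
  have flow : ρ (hurwitzProduct 0 0 p r) ≤ ρ (hurwitzProduct a b p r) := by
    refine hρ.map_hurwitzProduct_zero_zero_le b hr
      (fun t ht ↦ (isStrictlyPositive_smul_one_add_smul ha ht).isUnit) fun t ht ↦ ?_
    have hd := inversePath_nonneg ha (Set.Ioo_subset_Icc_self ht)
    have conj_nonneg {x : R} (hx : 0 ≤ x) : 0 ≤ CFC.conjSqrt (inversePath a t) x := by
      simpa only [map_zero] using CFC.conjSqrt_le_conjSqrt hx
    have conj_pos := hpos (conj_nonneg ha.nonneg) (conj_nonneg hb)
    rw [← hτ.map_hurwitzProduct_mul_left_eq_conjSqrt hd] at conj_pos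
    exact (Complex.nonneg_iff.1 conj_pos).1
  have start : 0 ≤ ρ (hurwitzProduct 0 0 p r) := by
    cases p with
    | zero =>
      rw [hurwitzProduct_zero_left, if_pos (Nat.le_zero.1 hr)]
      exact (Complex.nonneg_iff.1 (τ.map_nonneg zero_le_one)).1
    | succ p => simp [hurwitzProduct, pencil]
  exact (map_hurwitzProduct_nonneg_iff_re ha.nonneg hb p r).2 (start.trans flow)

theorem map_hurwitzProduct_nonneg_of_succ (hτ : IsTracial τ) {p r : ℕ} (hr : r ≤ p)
    (hpos : ∀ {x y : R}, 0 ≤ x → 0 ≤ y → 0 ≤ τ (hurwitzProduct x y (p + 1) r))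
    (ha : 0 ≤ a) (hb : 0 ≤ b) : 0 ≤ τ (hurwitzProduct a b p r) := by
  have cont : ContinuousAt (fun ε : ℝ ↦ τ (hurwitzProduct (a + ε • 1) b p r)) 0 := by
    have := ((hasDerivAt_id (0 : ℝ)).smul_const (1 : R)).const_add a
    exact (map_continuous τ).continuousAt.comp
      (hasDerivAt_hurwitzProduct this (hasDerivAt_const 0 b) p r).continuousAt
  have lim := cont.tendsto.mono_left (nhdsWithin_le_nhds (s := Set.Ioi 0))
  rw [zero_smul, add_zero] at lim
  refine ge_of_tendsto lim ?_
  filter_upwards [self_mem_nhdsWithin] with ε hε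
  exact hτ.map_hurwitzProduct_nonneg_of_succ_of_isStrictlyPositive hr hpos
    (IsStrictlyPositive.nonneg_add ha (isStrictlyPositive_one.smul hε)) hb

lemma map_hurwitzProduct_one_nonneg (hτ : IsTracial τ) (ha : 0 ≤ a) (hb : 0 ≤ b) (p : ℕ) :
    0 ≤ τ (hurwitzProduct a b (p + 1) 1) := by
  refine hτ.map_hurwitzProduct_succ_succ_nonneg ?_
  rw [hurwitzProduct_zero_right]
  exact hτ.map_mul_nonneg hb (CStarAlgebra.pow_nonneg ha p)

lemma map_hurwitzProduct_two_nonneg (hτ : IsTracial τ) (ha : 0 ≤ a) (hb : 0 ≤ b) (p : ℕ) :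
    0 ≤ τ (hurwitzProduct a b (p + 1) 2) := by
  refine hτ.map_hurwitzProduct_succ_succ_nonneg ?_
  rw [hurwitzProduct_one_right, powDeriv, Finset.mul_sum, map_sum]
  refine Finset.sum_nonneg fun i _ ↦ ?_
  rw [← mul_assoc, ← mul_assoc]
  exact hτ.map_mul_nonneg (conjugate_nonneg_of_nonneg (CStarAlgebra.pow_nonneg ha i) hb)
    (CStarAlgebra.pow_nonneg ha _)

lemma map_hurwitzProduct_seven_three_nonneg (hτ : IsTracial τ) (ha : 0 ≤ a) (hb : 0 ≤ b) :
    0 ≤ τ (hurwitzProduct a b 7 3) := by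
  refine hτ.map_hurwitzProduct_succ_succ_nonneg ?_
  rw [hτ.map_mul_hurwitzProduct_six_two]
  refine nsmul_nonneg (τ.map_nonneg (add_nonneg ?_ ?_)) 3
  · have : star (a ^ 2 * b + a * b * a) = a * b * a + b * a ^ 2 := by
      simp [ha.isSelfAdjoint.star_eq, hb.isSelfAdjoint.star_eq, add_comm, mul_assoc]
    exact this ▸ star_right_conjugate_nonneg hb _
  · have := conjugate_nonneg_of_nonneg
      (conjugate_nonneg_of_nonneg hb (CStarAlgebra.pow_nonneg ha 2)) hb
    simpa only [mul_assoc] using this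

lemma map_hurwitzProduct_seven_nonneg_of_le_three (hτ : IsTracial τ) (ha : 0 ≤ a) (hb : 0 ≤ b)
    {r : ℕ} (hr : r ≤ 3) : 0 ≤ τ (hurwitzProduct a b 7 r) := by
  interval_cases r
  · exact hurwitzProduct_zero_right a b 7 ▸ τ.map_nonneg (CStarAlgebra.pow_nonneg ha 7)
  · exact hτ.map_hurwitzProduct_one_nonneg ha hb 6
  · exact hτ.map_hurwitzProduct_two_nonneg ha hb 6
  · exact hτ.map_hurwitzProduct_seven_three_nonneg ha hb

lemma map_hurwitzProduct_seven_nonneg (hτ : IsTracial τ) (ha : 0 ≤ a) (hb : 0 ≤ b) {r : ℕ}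
    (hr : r ≤ 7) : 0 ≤ τ (hurwitzProduct a b 7 r) := by
  rcases le_or_gt r 3 with h | h
  · exact hτ.map_hurwitzProduct_seven_nonneg_of_le_three ha hb h
  · obtain ⟨q, hq⟩ := Nat.exists_eq_add_of_le' hr
    rw [hq, hurwitzProduct_swap, ← hq]
    exact hτ.map_hurwitzProduct_seven_nonneg_of_le_three hb ha (by omega)

end IsTracial

theorem bmv_p_le_7_general (hτ : IsTracial τ) (ha : 0 ≤ a) (hb : 0 ≤ b) {p : ℕ} (hp : p ≤ 7)
    (r : ℕ) : 0 ≤ τ (hurwitzProduct a b p r) := by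
  rcases lt_or_ge p r with h | hr
  · rw [hurwitzProduct_eq_zero_of_lt a b h, map_zero]
  induction hp using Nat.decreasingInduction generalizing a b with
  | self => exact hτ.map_hurwitzProduct_seven_nonneg ha hb hr
  | of_succ p _ ih =>
    exact hτ.map_hurwitzProduct_nonneg_of_succ hr (fun hx hy ↦ ih hx hy (by omega)) ha hb

end CStarAlgebra

lemma coeff_trace_pencil_pow {n R : Type*} [Fintype n] [DecidableEq n] [CommRing R]
    (A B : Matrix n n R) (p r : ℕ) :
    (((A.map C + (X : R[X]) • B.map C) ^ p).trace).coeff r = (hurwitzProduct A B p r).trace := by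
  have hpencil : matPolyEquiv (A.map C + (X : R[X]) • B.map C) = pencil A B := by
    rw [map_add, matPolyEquiv_map_smul, matPolyEquiv_map_C, matPolyEquiv_map_C, map_X, pencil]
  rw [hurwitzProduct, ← hpencil, ← map_pow]
  simp only [trace, finsetSum_coeff, diag_apply, matPolyEquiv_coeff_apply]

open scoped MatrixOrder Matrix.Norms.L2Operator

theorem bmv_p_le_7 {n : ℕ} (A B : Matrix (Fin n) (Fin n) ℂ)
    (hA : A.PosSemidef) (hB : B.PosSemidef) (p : ℕ) (hp : p ≤ 7) (r : ℕ) :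
    0 ≤ (((A.map Polynomial.C
        + (Polynomial.X : Polynomial ℂ) • B.map Polynomial.C) ^ p).trace).coeff r := by
  rw [coeff_trace_pencil_pow]
  exact bmv_p_le_7_general (τ := tracePositiveLinearMap (Fin n) ℂ ℂ) trace_mul_comm hA.nonneg
    hB.nonneg hp r
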